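/- Copy-merging lemma: let Ĝ = (V, d̂) be a semimetric ATSP instance, u ∈ V a fixed vertex, and G' the graph formed by taking N copies of Ĝ and merging the N copies of u into one supervertex U, where arcs inside a copy keep their weight and an arc from a copy of x₁ in one copy to a copy of x₂ in a different copy gets weight d̂(x₁,u) + d̂(u,x₂). Then the minimum Hamiltonian cycle weight in G' equals N times the minimum Hamiltonian cycle weight in Ĝ. -/

import Mathlib

/-- Weight of the Hamiltonian cycle visiting `σ 0, σ 1, …, σ (m-1), σ 0`. -/
def cycleWeight {V : Type*} (m : ℕ) (d : V → V → ℕ) (σ : Fin m → V) : ℕ :=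
  ∑ i : Fin m, d (σ i) (σ ⟨((i : ℕ) + 1) % m, Nat.mod_lt _ i.pos⟩)

/-- Vertex set of the copy-merging construction: `inl ()` is the supervertex
`U`, and `inr (x, i)` is the copy of `x ≠ u` in the `i`-th copy of `Ĝ`. -/
abbrev MergedV (n N : ℕ) (u : Fin n) := Unit ⊕ ({x : Fin n // x ≠ u} × Fin N)

/-- Arc weights of the copy-merging construction. -/
def mergedD {n N : ℕ} (d : Fin n → Fin n → ℕ) (u : Fin n) :
    MergedV n N u → MergedV n N u → ℕ
  | Sum.inl _, Sum.inl _ => 0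
  | Sum.inl _, Sum.inr y => d u y.1.1
  | Sum.inr x, Sum.inl _ => d x.1.1 u
  | Sum.inr x, Sum.inr y => if x.2 = y.2 then d x.1.1 y.1.1
      else d x.1.1 u + d u y.1.1

/-!
Cut every Hamiltonian cycle at `u`, respectively at the supervertex `U`. Collapsing all copies but
the `k`-th to `u` maps `G'` onto `Ĝ`, and the weight in `G'` is the sum over `k` of the weights of
the images. Hence the weight of a Hamiltonian cycle of `G'` is the sum of the weights of `N` closed
walks of `Ĝ`, each of which visits every vertex other than `u` once; cutting out the repeated visits
of `u` makes each of them a Hamiltonian cycle without increasing its weight. Conversely,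
concatenating the `N` copies of an optimal cycle of `Ĝ` at `U` gives a closed walk of `G'`, whose
intermediate visits of `U` are cut out in the same way.
-/

section PathWeight

variable {V W M ι : Type*}

/-- Weight of the walk that starts at the first vertex, visits the listed vertices in order and
ends at the last argument. A closed walk is encoded by taking the two endpoints equal. -/
def pathWeight [Add M] (d : V → V → M) : V → List V → V → M
  | a, [], e => d a e
  | a, b :: l, e => d a b + pathWeight d b l e

theorem pathWeight_map [Add M] (D : W → W → M) (f : V → W) (a : V) (l : List V) (e : V) :
    pathWeight D (f a) (l.map f) (f e) = pathWeight (fun x y => D (f x) (f y)) a l e := by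
  induction l generalizing a with
  | nil => rfl
  | cons b l ih => simp only [List.map_cons, pathWeight, ih]

theorem pathWeight_ofFn [AddCommMonoid M] (d : V → V → M) (k : ℕ) (σ : Fin (k + 1) → V) (e : V) :
    pathWeight d (σ 0) (List.ofFn fun i : Fin k => σ i.succ) e =
      ∑ i : Fin k, d (σ i.castSucc) (σ i.succ) + d (σ (Fin.last k)) e := by
  induction k with
  | zero => simp [pathWeight]
  | succ k ih =>
    have tail := ih fun i => σ i.succ
    rw [Fin.succ_last] at tail
    rw [List.ofFn_succ, pathWeight, tail, Fin.sum_univ_succ]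
    exact (add_assoc _ _ _).symm

theorem pathWeight_sum [AddCommMonoid M] (s : Finset ι) (d : ι → V → V → M) (a : V) (l : List V)
    (e : V) :
    pathWeight (fun x y => ∑ k ∈ s, d k x y) a l e = ∑ k ∈ s, pathWeight (d k) a l e := by
  induction l generalizing a with
  | nil => rfl
  | cons b l ih => simp only [pathWeight, ih, Finset.sum_add_distrib]

variable [AddCommMonoid M] [PartialOrder M] [IsOrderedAddMonoid M] {d : V → V → M} {u : V}

theorem pathWeight_le_add_pathWeight (hd : ∀ x y, d x y ≤ d x u + d u y) (a : V) (l : List V)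
    (e : V) : pathWeight d a l e ≤ d a u + pathWeight d u l e := by
  cases l with
  | nil => exact hd a e
  | cons b l =>
    rw [pathWeight, pathWeight, ← add_assoc]
    gcongr
    exact hd a b

theorem pathWeight_append_le (hd : ∀ x y, d x y ≤ d x u + d u y) (a : V) (l₁ l₂ : List V)
    (e : V) :
    pathWeight d a (l₁ ++ l₂) e ≤ pathWeight d a l₁ u + pathWeight d u l₂ e := by
  induction l₁ generalizing a with
  | nil => exact pathWeight_le_add_pathWeight hd a l₂ e
  | cons b l₁ ih =>
    rw [List.cons_append, pathWeight, pathWeight, add_assoc]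
    gcongr
    exact ih b

theorem pathWeight_flatMap_le (hd : ∀ x y, d x y ≤ d x u + d u y) (hu : d u u = 0) (I : List ι)
    (f : ι → List V) :
    pathWeight d u (I.flatMap f) u ≤ (I.map fun k => pathWeight d u (f k) u).sum := by
  induction I with
  | nil => exact hu.le
  | cons k I ih =>
    rw [List.flatMap_cons, List.map_cons, List.sum_cons]
    exact (pathWeight_append_le hd u _ _ u).trans (by gcongr)

theorem pathWeight_filter_ne_le [DecidableEq V] (hd : ∀ x y, d x y ≤ d x u + d u y) (a : V)
    (l : List V) (e : V) : pathWeight d a (l.filter (· ≠ u)) e ≤ pathWeight d a l e := by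
  induction l generalizing a with
  | nil => rfl
  | cons b l ih =>
    obtain rfl | hb := eq_or_ne b u
    · calc pathWeight d a ((b :: l).filter (· ≠ b)) e
          = pathWeight d a (l.filter (· ≠ b)) e := by simp
        _ ≤ d a b + pathWeight d b (l.filter (· ≠ b)) e := pathWeight_le_add_pathWeight hd a _ e
        _ ≤ d a b + pathWeight d b l e := by gcongr; exact ih b
    · rw [List.filter_cons_of_pos (by simpa using hb), pathWeight, pathWeight]
      gcongr
      exact ih b

end PathWeight

section Tour

variable {V : Type*} {u : V}

/-- A Hamiltonian cycle cut at `u`: the list of the vertices other than `u`, each occurring once, in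
the order in which they are visited. -/
structure IsTour (u : V) (l : List V) : Prop where
  nodup : l.Nodup
  mem_iff : ∀ x, x ∈ l ↔ x ≠ u

/-- The least weight of a Hamiltonian cycle cut at `u`. On an infinite type there is none, and the
value is `sInf ∅ = 0`. -/
noncomputable def minTourWeight (d : V → V → ℕ) (u : V) : ℕ :=
  sInf {c | ∃ l, IsTour u l ∧ c = pathWeight d u l u}

theorem exists_isTour [Finite V] (u : V) : ∃ l, IsTour u l := by
  classical
  have := Fintype.ofFinite V
  exact ⟨(Finset.univ.erase u).toList, Finset.nodup_toList _, by simp⟩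

theorem minTourWeight_le (d : V → V → ℕ) {l : List V} (hl : IsTour u l) :
    minTourWeight d u ≤ pathWeight d u l u :=
  Nat.sInf_le ⟨l, hl, rfl⟩

theorem exists_isTour_minTourWeight_eq [Finite V] (d : V → V → ℕ) (u : V) :
    ∃ l, IsTour u l ∧ minTourWeight d u = pathWeight d u l u :=
  let ⟨l, hl⟩ := exists_isTour u
  Nat.sInf_mem (s := {c | ∃ l, IsTour u l ∧ c = pathWeight d u l u}) ⟨_, l, hl, rfl⟩

theorem cycleWeight_succ (d : V → V → ℕ) (k : ℕ) (σ : Fin (k + 1) → V) :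
    cycleWeight (k + 1) d σ = ∑ i, d (σ i) (σ (i + 1)) := by
  refine Finset.sum_congr rfl fun i _ => ?_
  congr 2
  ext
  simp [Fin.val_add]

theorem cycleWeight_comp_add_right (d : V → V → ℕ) (k : ℕ) (σ : Fin (k + 1) → V)
    (j : Fin (k + 1)) : cycleWeight (k + 1) d (fun i => σ (i + j)) = cycleWeight (k + 1) d σ := by
  simp only [cycleWeight_succ, add_right_comm _ 1 j]
  exact Equiv.sum_comp (Equiv.addRight j) fun i => d (σ i) (σ (i + 1))

theorem cycleWeight_eq_pathWeight (d : V → V → ℕ) (k : ℕ) (σ : Fin (k + 1) → V) :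
    cycleWeight (k + 1) d σ =
      pathWeight d (σ 0) (List.ofFn fun i : Fin k => σ i.succ) (σ 0) := by
  simp [pathWeight_ofFn, cycleWeight_succ, Fin.sum_univ_castSucc]

theorem isTour_ofFn_succ {k : ℕ} (σ : Fin (k + 1) ≃ V) :
    IsTour (σ 0) (List.ofFn fun i : Fin k => σ i.succ) where
  nodup := List.nodup_ofFn.2 (σ.injective.comp (Fin.succ_injective k))
  mem_iff x := by
    obtain ⟨j, rfl⟩ := σ.surjective x
    simp [List.mem_ofFn, Fin.exists_succ_eq]

theorem exists_isTour_cycleWeight_eq (d : V → V → ℕ) (u : V) {k : ℕ} (σ : Fin (k + 1) ≃ V) :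
    ∃ l, IsTour u l ∧ cycleWeight (k + 1) d σ = pathWeight d u l u := by
  let τ : Fin (k + 1) ≃ V := (Equiv.addRight (σ.symm u)).trans σ
  have hτ : τ 0 = u := by simp [τ]
  refine ⟨_, hτ ▸ isTour_ofFn_succ τ, ?_⟩
  have cut := cycleWeight_eq_pathWeight d k τ
  rw [hτ] at cut
  exact (cycleWeight_comp_add_right d k σ (σ.symm u)).symm.trans cut

theorem IsTour.exists_equiv_cycleWeight_eq [Fintype V] (d : V → V → ℕ) {l : List V}
    (hl : IsTour u l) {k : ℕ} (hV : Fintype.card V = k + 1) :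
    ∃ σ : Fin (k + 1) ≃ V, cycleWeight (k + 1) d σ = pathWeight d u l u := by
  classical
  have nodup : (u :: l).Nodup := List.nodup_cons.2 ⟨fun hu => (hl.mem_iff u).1 hu rfl, hl.nodup⟩
  have mem (x : V) : x ∈ u :: l := by
    rw [List.mem_cons, hl.mem_iff]
    exact em _
  let σ : Fin (l.length + 1) ≃ V := nodup.getEquivOfForallMemList (u :: l) mem
  obtain rfl : l.length = k := by simpa [hV] using Fintype.card_congr σ
  have ofFn_succ : (List.ofFn fun i : Fin l.length => σ i.succ) = l := List.ofFn_get l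
  refine ⟨σ, ?_⟩
  rw [cycleWeight_eq_pathWeight, ofFn_succ]
  rfl

theorem sInf_cycleWeight_eq_minTourWeight [Fintype V] (d : V → V → ℕ) (u : V) {m : ℕ}
    (hV : Fintype.card V = m) :
    sInf {c | ∃ σ : Fin m ≃ V, c = cycleWeight m d σ} = minTourWeight d u := by
  obtain ⟨k, rfl⟩ : ∃ k, m = k + 1 :=
    Nat.exists_eq_succ_of_ne_zero (hV ▸ (Fintype.card_pos_iff.2 ⟨u⟩).ne')
  rw [minTourWeight]
  congr 1 with c
  constructor
  · rintro ⟨σ, rfl⟩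
    exact exists_isTour_cycleWeight_eq d u σ
  · rintro ⟨l, hl, rfl⟩
    obtain ⟨σ, hσ⟩ := hl.exists_equiv_cycleWeight_eq d hV
    exact ⟨σ, hσ.symm⟩

end Tour

section Merged

variable {n N : ℕ} {d : Fin n → Fin n → ℕ} {u : Fin n}

/-- The projection of the merged graph onto its `k`-th copy, which collapses all other copies
to `u`. -/
def copyProj (u : Fin n) (k : Fin N) : MergedV n N u → Fin n
  | Sum.inl _ => u
  | Sum.inr x => if x.2 = k then x.1.1 else u

/-- The inclusion of the `k`-th copy into the merged graph, which sends `u` to the supervertex. -/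
def copyIncl (u : Fin n) (k : Fin N) (x : Fin n) : MergedV n N u :=
  if h : x = u then Sum.inl () else Sum.inr (⟨x, h⟩, k)

theorem copyIncl_self (k : Fin N) : copyIncl u k u = Sum.inl () :=
  dif_pos rfl

theorem copyIncl_eq_inl_iff {k : Fin N} {x : Fin n} : copyIncl u k x = Sum.inl () ↔ x = u := by
  simp [copyIncl]

theorem copyProj_copyIncl (k : Fin N) (x : Fin n) : copyProj u k (copyIncl u k x) = x := by
  by_cases hx : x = u <;> simp [copyIncl, copyProj, hx]

theorem copyProj_copyIncl_of_ne {j k : Fin N} (hjk : j ≠ k) (x : Fin n) :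
    copyProj u j (copyIncl u k x) = u := by
  by_cases hx : x = u <;> simp [copyIncl, copyProj, hx, hjk.symm]

theorem copyIncl_copyProj {k : Fin N} {a : MergedV n N u} (ha : copyProj u k a ≠ u) :
    copyIncl u k (copyProj u k a) = a := by
  obtain _ | ⟨⟨x, hx⟩, j⟩ := a
  · exact absurd rfl ha
  · obtain rfl | hj := eq_or_ne j k
    · simp [copyProj, copyIncl, hx]
    · simp [copyProj, hj] at ha

theorem exists_copyProj_ne {a : MergedV n N u} (ha : a ≠ Sum.inl ()) :
    ∃ k, copyProj u k a ≠ u := by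
  obtain _ | ⟨⟨x, hx⟩, k⟩ := a
  · exact absurd rfl ha
  · exact ⟨k, by simpa [copyProj] using hx⟩

theorem card_mergedV (n N : ℕ) (u : Fin n) : Fintype.card (MergedV n N u) = (n - 1) * N + 1 := by
  simp [Fintype.card_subtype_compl, add_comm]

theorem mergedD_eq_sum (hu : d u u = 0) (a b : MergedV n N u) :
    mergedD d u a b = ∑ k, d (copyProj u k a) (copyProj u k b) := by
  rcases a with _ | ⟨x, i⟩ <;> rcases b with _ | ⟨y, j⟩ <;> simp only [mergedD, copyProj]
  · simp [hu]
  · simp [apply_ite, hu]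
  · simp [apply_ite (d · u), hu]
  · obtain rfl | hij := eq_or_ne i j
    · have split_at (k : Fin N) : d (if i = k then x.1 else u) (if i = k then y.1 else u) =
          if i = k then d x.1 y.1 else 0 := by split_ifs <;> simp [hu]
      simp [split_at]
    · have split_at (k : Fin N) : d (if i = k then x.1 else u) (if j = k then y.1 else u) =
          (if i = k then d x.1 u else 0) + if j = k then d u y.1 else 0 := by
        grind
      simp [split_at, hij, Finset.sum_add_distrib]

theorem mergedD_copyIncl (hu : d u u = 0) (k : Fin N) (x y : Fin n) :
    mergedD d u (copyIncl u k x) (copyIncl u k y) = d x y := by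
  rw [mergedD_eq_sum hu, Finset.sum_eq_single_of_mem k (Finset.mem_univ k)]
  · simp only [copyProj_copyIncl]
  · intro j _ hjk
    simp only [copyProj_copyIncl_of_ne hjk, hu]

theorem mergedD_le_add (hu : d u u = 0) (hd : ∀ x y, d x y ≤ d x u + d u y)
    (a b : MergedV n N u) :
    mergedD d u a b ≤ mergedD d u a (Sum.inl ()) + mergedD d u (Sum.inl ()) b := by
  simp only [mergedD_eq_sum hu, ← Finset.sum_add_distrib]
  exact Finset.sum_le_sum fun k _ => hd _ _

theorem pathWeight_mergedD (hu : d u u = 0) (a : MergedV n N u) (L : List (MergedV n N u))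
    (e : MergedV n N u) :
    pathWeight (mergedD d u) a L e =
      ∑ k, pathWeight d (copyProj u k a) (L.map (copyProj u k)) (copyProj u k e) := by
  simp only [pathWeight_map, ← pathWeight_sum, ← mergedD_eq_sum hu]

theorem pathWeight_map_copyIncl (hu : d u u = 0) (k : Fin N) (l : List (Fin n)) :
    pathWeight (mergedD d u) (Sum.inl ()) (l.map (copyIncl u k)) (Sum.inl ()) =
      pathWeight d u l u := by
  rw [← copyIncl_self k, pathWeight_map]
  simp only [mergedD_copyIncl hu]

theorem IsTour.filter_map_copyProj {L : List (MergedV n N u)} (hL : IsTour (Sum.inl ()) L)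
    (k : Fin N) : IsTour u ((L.map (copyProj u k)).filter (· ≠ u)) where
  nodup := by
    rw [List.filter_map]
    refine (hL.nodup.filter _).map_on fun a ha b hb hab => ?_
    have ne_of_mem {c} (hc : c ∈ L.filter ((· ≠ u) ∘ copyProj u k)) : copyProj u k c ≠ u := by
      simpa using (List.mem_filter.1 hc).2
    rw [← copyIncl_copyProj (ne_of_mem ha), hab, copyIncl_copyProj (ne_of_mem hb)]
  mem_iff x := by
    simp only [List.mem_filter, List.mem_map, decide_eq_true_eq, and_iff_right_iff_imp]
    intro hx
    exact ⟨copyIncl u k x, (hL.mem_iff _).2 (mt copyIncl_eq_inl_iff.1 hx), copyProj_copyIncl k x⟩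

theorem IsTour.flatMap_copyIncl {l : List (Fin n)} (hl : IsTour u l) (N : ℕ) :
    IsTour (Sum.inl ()) ((List.finRange N).flatMap fun k => l.map (copyIncl u k)) where
  nodup := by
    refine List.nodup_flatMap.2 ⟨fun k _ => ?_, (List.nodup_finRange N).imp fun {j k} hjk => ?_⟩
    · exact hl.nodup.map (Function.LeftInverse.injective (copyProj_copyIncl k))
    · rintro _ hj hk
      obtain ⟨x, hx, rfl⟩ := List.mem_map.1 hj
      obtain ⟨y, -, hxy⟩ := List.mem_map.1 hk
      refine (hl.mem_iff x).1 hx ?_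
      rw [← copyProj_copyIncl (u := u) j x, ← hxy, copyProj_copyIncl_of_ne hjk]
  mem_iff a := by
    simp only [List.mem_flatMap, List.mem_map, List.mem_finRange, true_and, hl.mem_iff]
    constructor
    · rintro ⟨k, x, hx, rfl⟩
      exact mt copyIncl_eq_inl_iff.1 hx
    · intro ha
      obtain ⟨k, hk⟩ := exists_copyProj_ne ha
      exact ⟨k, _, hk, copyIncl_copyProj hk⟩

theorem minTourWeight_mergedD_le (N : ℕ) (hu : d u u = 0) (hd : ∀ x y, d x y ≤ d x u + d u y) :
    minTourWeight (mergedD (N := N) d u) (Sum.inl ()) ≤ N * minTourWeight d u := by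
  obtain ⟨l, hl, hmin⟩ := exists_isTour_minTourWeight_eq d u
  calc minTourWeight (mergedD (N := N) d u) (Sum.inl ())
      ≤ pathWeight (mergedD d u) (Sum.inl ())
          ((List.finRange N).flatMap fun k => l.map (copyIncl u k)) (Sum.inl ()) :=
        minTourWeight_le _ (hl.flatMap_copyIncl N)
    _ ≤ ((List.finRange N).map fun k => pathWeight (mergedD d u) (Sum.inl ())
          (l.map (copyIncl u k)) (Sum.inl ())).sum :=
        pathWeight_flatMap_le (mergedD_le_add hu hd) rfl _ _
    _ = N * minTourWeight d u := by simp [pathWeight_map_copyIncl hu, hmin]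

theorem mul_minTourWeight_le (N : ℕ) (hu : d u u = 0) (hd : ∀ x y, d x y ≤ d x u + d u y) :
    N * minTourWeight d u ≤ minTourWeight (mergedD (N := N) d u) (Sum.inl ()) := by
  obtain ⟨L, hL, hmin⟩ := exists_isTour_minTourWeight_eq (mergedD (N := N) d u) (Sum.inl ())
  calc N * minTourWeight d u
      = ∑ _k : Fin N, minTourWeight d u := by simp
    _ ≤ ∑ k, pathWeight d u ((L.map (copyProj u k)).filter (· ≠ u)) u := by
        gcongr with k
        exact minTourWeight_le d (hL.filter_map_copyProj k)
    _ ≤ ∑ k, pathWeight d u (L.map (copyProj u k)) u := by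
        gcongr with k
        exact pathWeight_filter_ne_le hd u _ u
    _ = pathWeight (mergedD d u) (Sum.inl ()) L (Sum.inl ()) :=
        (pathWeight_mergedD hu (Sum.inl ()) L (Sum.inl ())).symm
    _ = minTourWeight (mergedD d u) (Sum.inl ()) := hmin.symm

end Merged

theorem copy_merging_general (n N : ℕ) (d : Fin n → Fin n → ℕ) (u : Fin n) (hu : d u u = 0)
    (hd : ∀ x y, d x y ≤ d x u + d u y) :
    sInf {c | ∃ σ : Fin ((n - 1) * N + 1) ≃ MergedV n N u,
        c = cycleWeight ((n - 1) * N + 1) (mergedD d u) σ} =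
      N * sInf {c | ∃ σ : Fin n ≃ Fin n, c = cycleWeight n d σ} := by
  rw [sInf_cycleWeight_eq_minTourWeight d u (Fintype.card_fin n),
    sInf_cycleWeight_eq_minTourWeight (mergedD d u) (Sum.inl ()) (card_mergedV n N u)]
  exact (minTourWeight_mergedD_le N hu hd).antisymm (mul_minTourWeight_le N hu hd)

/-- copy-merging lemma: the minimum Hamiltonian cycle weight in
the merged graph `G'` made of `N` copies of `Ĝ` glued at `u` equals `N` times
the minimum Hamiltonian cycle weight in `Ĝ`. -/
theorem copy_merging (n N : ℕ) (hn : 0 < n) (hN : 0 < N)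
    (d : Fin n → Fin n → ℕ) (u : Fin n)
    (hself : ∀ x, d x x = 0)
    (htri : ∀ x y z, d x z ≤ d x y + d y z) :
    sInf {c | ∃ σ : Fin ((n - 1) * N + 1) ≃ MergedV n N u,
        c = cycleWeight ((n - 1) * N + 1) (mergedD d u) σ} =
      N * sInf {c | ∃ σ : Fin n ≃ Fin n, c = cycleWeight n d σ} :=
  copy_merging_general n N d u (hself u) fun x z => htri x u z
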